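/- Let ε > 0 and K > 0, and let (x_n)_{n≥1} be a sequence of complex numbers with |x_n| ≤ K n^{1/2−ε} for all n ≥ 1. Then there exist a constant C > 0 and an index N such that for all n ≥ N, |(1 + x_n/n)^n − exp(x_n)| ≤ C n^{−ε} |exp(x_n)|. -/

import Mathlib

open Asymptotics Filter Topology

/-!
Writing `z = x / n`, one has `(1 + z) ^ n = exp w * exp (n * z)` with
`w = n * (log (1 + z) - z) = O(n * z ^ 2) = O(x ^ 2 / n)`. As soon as `x = O(√n)`, the exponent `w`
is bounded, so that `exp w - 1 = O(w)`.
-/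

lemma isBigO_cexp_sub_one {α : Type*} {l : Filter α} {w : α → ℂ}
    (hw : w =O[l] (1 : α → ℝ)) : (fun a ↦ Complex.exp (w a) - 1) =O[l] w := by
  obtain ⟨c, hc⟩ := hw.bound
  refine .of_bound (Real.exp c) ?_
  filter_upwards [hc] with a ha
  calc ‖Complex.exp (w a) - 1‖ ≤ ‖w a‖ * Real.exp ‖w a‖ := by
        simpa using Complex.norm_exp_sub_sum_le_norm_mul_exp (w a) 1
    _ ≤ Real.exp c * ‖w a‖ := by
        rw [mul_comm]
        gcongr
        simpa using ha

lemma one_add_pow_eq_cexp_mul_cexp {z : ℂ} (hz : 1 + z ≠ 0) (n : ℕ) :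
    (1 + z) ^ n = Complex.exp (n * (Complex.log (1 + z) - z)) * Complex.exp (n * z) := by
  rw [← Complex.exp_add, ← mul_add, sub_add_cancel, Complex.exp_nat_mul, Complex.exp_log hz]

lemma isBigO_one_add_pow_sub_cexp {α : Type*} {l : Filter α} {n : α → ℕ} {z : α → ℂ}
    (hz : Tendsto z l (𝓝 0)) (hnz : (fun a ↦ n a * z a ^ 2) =O[l] (1 : α → ℝ)) :
    (fun a ↦ (1 + z a) ^ n a - Complex.exp (n a * z a)) =O[l]
      fun a ↦ n a * z a ^ 2 * Complex.exp (n a * z a) := by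
  have hlog : (fun a ↦ n a * (Complex.log (1 + z a) - z a)) =O[l] fun a ↦ n a * z a ^ 2 :=
    (isBigO_refl _ l).mul (Complex.log_sub_self_isBigO.comp_tendsto hz)
  have hexp := (isBigO_cexp_sub_one (hlog.trans hnz)).trans hlog
  have hne : ∀ᶠ a in l, 1 + z a ≠ 0 := (hz.const_add 1).eventually_ne (by simp)
  refine (hexp.mul (isBigO_refl (fun a ↦ Complex.exp (n a * z a)) l)).congr' ?_ .rfl
  filter_upwards [hne] with a ha
  rw [one_add_pow_eq_cexp_mul_cexp ha, sub_mul, one_mul]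

lemma isBigO_div_natCast {l : Filter ℕ} {f : ℕ → ℂ} {g : ℕ → ℝ} (hfg : f =O[l] g) :
    (fun n ↦ f n / n) =O[l] fun n ↦ g n / n := by
  simpa only [div_eq_mul_inv, norm_inv, Complex.norm_natCast] using
    hfg.mul (isBigO_refl (fun n : ℕ ↦ (n : ℂ)⁻¹) l).norm_right

lemma isBigO_one_add_div_pow_sub_cexp {x : ℕ → ℂ} (hx : x =O[atTop] fun n : ℕ ↦ √(n : ℝ)) :
    (fun n : ℕ ↦ (1 + x n / n) ^ n - Complex.exp (x n)) =O[atTop]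
      fun n : ℕ ↦ x n ^ 2 / n * Complex.exp (x n) := by
  have hz : Tendsto (fun n : ℕ ↦ x n / n) atTop (𝓝 0) := by
    have hdiv : (fun n : ℕ ↦ x n / n) =O[atTop] fun n : ℕ ↦ (√(n : ℝ))⁻¹ := by
      simpa only [Real.sqrt_div_self, one_div] using isBigO_div_natCast hx
    exact hdiv.trans_tendsto
      (Real.tendsto_sqrt_atTop.comp tendsto_natCast_atTop_atTop).inv_tendsto_atTop
  have hmul : ∀ᶠ n : ℕ in atTop, n * (x n / n) = x n := by
    filter_upwards [eventually_ne_atTop 0] with n hn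
    field_simp
  have hmul_sq : ∀ᶠ n : ℕ in atTop, n * (x n / n) ^ 2 = x n ^ 2 / n := by
    filter_upwards [eventually_ne_atTop 0] with n hn
    field_simp
  have hbdd : (fun n : ℕ ↦ n * (x n / n) ^ 2) =O[atTop] (1 : ℕ → ℝ) := by
    refine (isBigO_div_natCast (hx.pow 2)).congr' (hmul_sq.mono fun _ ↦ Eq.symm) ?_
    filter_upwards [eventually_ne_atTop 0] with n hn
    simp [hn]
  refine (isBigO_one_add_pow_sub_cexp hz hbdd).congr' ?_ ?_
  · filter_upwards [hmul] with n hn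
    rw [hn]
  · filter_upwards [hmul, hmul_sq] with n hn hn_sq
    rw [hn, hn_sq]

lemma isBigO_natCast_rpow_of_le {a b : ℝ} (hab : a ≤ b) :
    (fun n : ℕ ↦ (n : ℝ) ^ a) =O[atTop] fun n : ℕ ↦ (n : ℝ) ^ b := by
  refine .of_norm_eventuallyLE ?_
  filter_upwards [eventually_ge_atTop 1] with n hn
  rw [Real.norm_of_nonneg (by positivity)]
  exact Real.rpow_le_rpow_of_exponent_le (by exact_mod_cast hn) hab

theorem taylor_one_add_pow_general {ε : ℝ} (hε : 0 ≤ ε) {x : ℕ → ℂ}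
    (hx : x =O[atTop] fun n : ℕ ↦ (n : ℝ) ^ ((1 : ℝ) / 2 - ε)) :
    (fun n : ℕ ↦ (1 + x n / n) ^ n - Complex.exp (x n)) =O[atTop]
      fun n : ℕ ↦ (n : ℝ) ^ (-(2 * ε)) * ‖Complex.exp (x n)‖ := by
  have hsqrt : x =O[atTop] fun n : ℕ ↦ √(n : ℝ) := by
    simpa only [Real.sqrt_eq_rpow] using hx.trans (isBigO_natCast_rpow_of_le (by linarith))
  have hsq : (fun n : ℕ ↦ x n ^ 2 / n) =O[atTop] fun n : ℕ ↦ (n : ℝ) ^ (-(2 * ε)) := by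
    refine (isBigO_div_natCast (hx.pow 2)).congr' .rfl ?_
    filter_upwards [eventually_ne_atTop 0] with n hn
    rw [← Real.rpow_mul_natCast n.cast_nonneg, ← Real.rpow_sub_one (by positivity)]
    congr 1
    push_cast
    ring
  exact (isBigO_one_add_div_pow_sub_cexp hsqrt).trans (hsq.mul (isBigO_refl _ _).norm_right)

/-- If `|x_n| ≤ K n^{1/2 - ε}`, then `(1 + x_n/n)^n = exp(x_n)(1 + O(n^{-ε}))`,
i.e. there are `C > 0` and `N` such that for all `n ≥ N`,
`|(1 + x_n/n)^n - exp(x_n)| ≤ C n^{-ε} |exp(x_n)|`. -/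
theorem taylor_one_add_pow (ε K : ℝ) (hε : 0 < ε) (hK : 0 < K) (x : ℕ → ℂ)
    (hx : ∀ n : ℕ, 1 ≤ n → ‖x n‖ ≤ K * (n : ℝ) ^ ((1 : ℝ) / 2 - ε)) :
    ∃ C : ℝ, 0 < C ∧ ∃ N : ℕ, ∀ n : ℕ, N ≤ n →
      ‖(1 + x n / (n : ℂ)) ^ n - Complex.exp (x n)‖ ≤
        C * (n : ℝ) ^ (-ε) * ‖Complex.exp (x n)‖ := by
  have hxO : x =O[atTop] fun n : ℕ ↦ (n : ℝ) ^ ((1 : ℝ) / 2 - ε) := by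
    refine .of_bound K ?_
    filter_upwards [eventually_ge_atTop 1] with n hn
    simpa only [Real.norm_of_nonneg (Real.rpow_nonneg n.cast_nonneg _)] using hx n hn
  obtain ⟨C, hC, hbound⟩ := ((taylor_one_add_pow_general hε.le hxO).trans
    ((isBigO_natCast_rpow_of_le (by linarith : -(2 * ε) ≤ -ε)).mul (isBigO_refl _ _))).exists_pos
  refine ⟨C, hC, eventually_atTop.1 (hbound.bound.mono fun n hn ↦ hn.trans_eq ?_)⟩
  rw [Real.norm_of_nonneg (by positivity), mul_assoc]
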